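/- Let C be a nonempty unbounded closed convex subset of a Banach space E. Assume C is locally weakly compact and has the weak fixed point property for nonexpansive mappings (WFPP). Let T be a nonexpansive mapping on C which is asymptotically contractive. Then T has a fixed point. -/

import Mathlib

open Filter

/-!
Beyond some distance from `x₀` the mapping contracts distances to `x₀` by a factor `c < 1`, and
closer to `x₀` nonexpansiveness bounds `dist (T x₀) (T y)`. Hence `dist (T x₀) (T y)` is at most
`c * dist x₀ y + b` on all of `C`, and as `c < 1` every sufficiently large closed ball about `x₀`
meets `C` in a `T`-invariant set. This set is weakly compact, so `T` has a fixed point in it.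
-/

open Bornology Metric Set
open scoped NNReal

section Metric

variable {α β : Type*} [PseudoMetricSpace α] [PseudoMetricSpace β]

/-- Asymptotic contractivity of `T` on `C`, with `y → ∞` read as `y` leaving every bounded set;
this makes sense without a norm. The quotient takes the value `0` where `dist x₀ y = 0`. -/
def AsymptoticallyContractiveOn (T : α → β) (C : Set α) : Prop :=
  ∃ x₀ ∈ C, limsup (fun y => dist (T x₀) (T y) / dist x₀ y) (cobounded α ⊓ 𝓟 C) < 1

theorem exists_eventually_dist_le_mul_of_limsup_lt {T : α → β} {C : Set α} {K : ℝ≥0} {x₀ : α}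
    {k : ℝ} {l : Filter α} (hT : LipschitzOnWith K T C) (hx₀ : x₀ ∈ C) (hk : 0 < k)
    (hl : l ≤ 𝓟 C) (hlim : limsup (fun y => dist (T x₀) (T y) / dist x₀ y) l < k) :
    ∃ c, 0 ≤ c ∧ c < k ∧ ∀ᶠ y in l, dist (T x₀) (T y) ≤ c * dist x₀ y := by
  have hC : ∀ᶠ y in l, y ∈ C := le_principal_iff.mp hl
  have hbdd : IsBoundedUnder (· ≤ ·) l fun y => dist (T x₀) (T y) / dist x₀ y :=
    isBoundedUnder_of_eventually_le (a := (K : ℝ)) <| hC.mono fun y hy =>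
      div_le_of_le_mul₀ dist_nonneg K.coe_nonneg (hT.dist_le_mul x₀ hx₀ y hy)
  obtain ⟨c, hc, hck⟩ := exists_between (max_lt hlim hk)
  obtain ⟨hlimc, hc₀⟩ := max_lt_iff.mp hc
  refine ⟨c, hc₀.le, hck, ?_⟩
  filter_upwards [hC, eventually_lt_of_limsup_lt hlimc hbdd] with y hy hquot
  rcases (dist_nonneg (x := x₀) (y := y)).eq_or_lt with hzero | hpos
  · simpa [← hzero] using hT.dist_le_mul x₀ hx₀ y hy
  · exact ((div_lt_iff₀ hpos).mp hquot).le

theorem exists_forall_dist_le_mul_add {T : α → β} {C : Set α} {K : ℝ≥0} {x₀ : α} {c : ℝ}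
    (hT : LipschitzOnWith K T C) (hx₀ : x₀ ∈ C) (hc : 0 ≤ c)
    (hfar : ∀ᶠ y in cobounded α ⊓ 𝓟 C, dist (T x₀) (T y) ≤ c * dist x₀ y) :
    ∃ b, ∀ y ∈ C, dist (T x₀) (T y) ≤ c * dist x₀ y + b := by
  rw [eventually_inf_principal, (hasBasis_cobounded_compl_closedBall x₀).eventually_iff] at hfar
  obtain ⟨R, -, hR⟩ := hfar
  refine ⟨K * max R 0, fun y hy => ?_⟩
  by_cases hnear : y ∈ closedBall x₀ R
  · calc dist (T x₀) (T y) ≤ K * dist x₀ y := hT.dist_le_mul x₀ hx₀ y hy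
      _ ≤ K * max R 0 := by gcongr; exact (mem_closedBall'.mp hnear).trans (le_max_left _ _)
      _ ≤ c * dist x₀ y + K * max R 0 := le_add_of_nonneg_left (by positivity)
  · exact (hR hnear hy).trans (le_add_of_nonneg_right (by positivity))

theorem eventually_mapsTo_inter_closedBall {T : α → α} {C : Set α} {x₀ : α} {b c : ℝ}
    (hc : 0 ≤ c) (hc₁ : c < 1) (hbound : ∀ y ∈ C, dist (T x₀) (T y) ≤ c * dist x₀ y + b) :
    ∀ᶠ r in atTop, MapsTo T (C ∩ closedBall x₀ r) (closedBall x₀ r) := by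
  filter_upwards [eventually_ge_atTop ((dist x₀ (T x₀) + b) / (1 - c))] with r hr
  rintro y ⟨hy, hyr⟩
  have hr' : dist x₀ (T x₀) + b ≤ r * (1 - c) := (div_le_iff₀ (sub_pos.mpr hc₁)).mp hr
  rw [mem_closedBall'] at hyr ⊢
  calc dist x₀ (T y) ≤ dist x₀ (T x₀) + dist (T x₀) (T y) := dist_triangle _ _ _
    _ ≤ dist x₀ (T x₀) + (c * dist x₀ y + b) := by gcongr; exact hbound y hy
    _ ≤ dist x₀ (T x₀) + (c * r + b) := by gcongr
    _ ≤ r := by linarith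

theorem AsymptoticallyContractiveOn.exists_eventually_mapsTo_inter_closedBall {T : α → α}
    {C : Set α} {K : ℝ≥0} (hAC : AsymptoticallyContractiveOn T C) (hT : LipschitzOnWith K T C) :
    ∃ x₀ ∈ C, ∀ᶠ r in atTop, MapsTo T (C ∩ closedBall x₀ r) (closedBall x₀ r) := by
  obtain ⟨x₀, hx₀, hlim⟩ := hAC
  obtain ⟨c, hc, hc₁, hfar⟩ :=
    exists_eventually_dist_le_mul_of_limsup_lt hT hx₀ one_pos inf_le_right hlim
  obtain ⟨b, hbound⟩ := exists_forall_dist_le_mul_add hT hx₀ hc hfar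
  exact ⟨x₀, hx₀, eventually_mapsTo_inter_closedBall hc hc₁ hbound⟩

end Metric

theorem lipschitzOnWith_one_iff_norm_sub_le {E F : Type*} [SeminormedAddCommGroup E]
    [SeminormedAddCommGroup F] {T : E → F} {C : Set E} :
    LipschitzOnWith 1 T C ↔ ∀ x ∈ C, ∀ y ∈ C, ‖T x - T y‖ ≤ ‖x - y‖ := by
  simp only [lipschitzOnWith_iff_dist_le_mul, dist_eq_norm, NNReal.coe_one, one_mul]

section WeakTopology

variable {E : Type*} [NormedAddCommGroup E] [NormedSpace ℝ E]

/-- Local weak compactness of `C`; weak compactness of `D` is compactness of its image in the type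
synonym `WeakSpace ℝ E`. Subsets `D` are required to be closed in the norm topology. -/
def LocallyWeaklyCompact (C : Set E) : Prop :=
  ∀ D ⊆ C, IsBounded D → IsClosed D → Convex ℝ D → IsCompact (toWeakSpace ℝ E '' D)

/-- The weak fixed point property of `C` for nonexpansive mappings. Mappings of `D` into itself are
represented by mappings of `E` whose values outside `D` are irrelevant. -/
def WeakFixedPointProperty (C : Set E) : Prop :=
  ∀ D ⊆ C, D.Nonempty → IsCompact (toWeakSpace ℝ E '' D) → Convex ℝ D →
    ∀ S : E → E, MapsTo S D D → LipschitzOnWith 1 S D → ∃ z ∈ D, S z = z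

theorem fixedPoint_of_asymptotically_contractive_wfpp_general {C : Set E} (hCcl : IsClosed C)
    (hCcv : Convex ℝ C) (hLWC : LocallyWeaklyCompact C) (hWFPP : WeakFixedPointProperty C)
    {T : E → E} (hTC : MapsTo T C C) (hTne : LipschitzOnWith 1 T C)
    (hAC : AsymptoticallyContractiveOn T C) : ∃ z ∈ C, T z = z := by
  obtain ⟨x₀, hx₀, hball⟩ := hAC.exists_eventually_mapsTo_inter_closedBall hTne
  obtain ⟨r, hr, hr₀⟩ := (hball.and (eventually_ge_atTop 0)).exists
  have hDC : C ∩ closedBall x₀ r ⊆ C := inter_subset_left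
  have hDcv : Convex ℝ (C ∩ closedBall x₀ r) := hCcv.inter (convex_closedBall x₀ r)
  have hDcompact : IsCompact (toWeakSpace ℝ E '' (C ∩ closedBall x₀ r)) :=
    hLWC _ hDC (isBounded_closedBall.subset inter_subset_right)
      (hCcl.inter isClosed_closedBall) hDcv
  obtain ⟨z, hz, hTz⟩ := hWFPP _ hDC ⟨x₀, hx₀, mem_closedBall_self hr₀⟩ hDcompact hDcv T
    ((hTC.mono_left hDC).inter hr) (hTne.mono hDC)
  exact ⟨z, hDC hz, hTz⟩

end WeakTopology

/-- Theorem 1 (ii): a nonexpansive, asymptotically contractive mapping on a nonempty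
unbounded closed convex subset of a Banach space which is locally weakly compact and
has the weak fixed point property for nonexpansive mappings has a fixed point. -/
theorem fixedPoint_of_asymptotically_contractive_wfpp
    {E : Type*} [NormedAddCommGroup E] [NormedSpace ℝ E] [CompleteSpace E]
    (C : Set E) (hCne : C.Nonempty) (hCub : ¬ Bornology.IsBounded C)
    (hCcl : IsClosed C) (hCcv : Convex ℝ C)
    (hLWC : ∀ D : Set E, D ⊆ C → Bornology.IsBounded D → IsClosed D → Convex ℝ D →
      IsCompact (toWeakSpace ℝ E '' D))
    (hWFPP : ∀ D : Set E, D ⊆ C → D.Nonempty → IsCompact (toWeakSpace ℝ E '' D) →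
      Convex ℝ D → ∀ S : E → E, Set.MapsTo S D D →
      (∀ x ∈ D, ∀ y ∈ D, ‖S x - S y‖ ≤ ‖x - y‖) → ∃ z ∈ D, S z = z)
    (T : E → E) (hTC : Set.MapsTo T C C)
    (hTne : ∀ x ∈ C, ∀ y ∈ C, ‖T x - T y‖ ≤ ‖x - y‖)
    (hAC : ∃ x₀ ∈ C, Filter.limsup (fun y => ‖T x₀ - T y‖ / ‖x₀ - y‖)
      ((Filter.comap norm Filter.atTop) ⊓ Filter.principal C) < 1) :
    ∃ z ∈ C, T z = z := by
  refine fixedPoint_of_asymptotically_contractive_wfpp_general hCcl hCcv hLWC ?_ hTC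
    (lipschitzOnWith_one_iff_norm_sub_le.mpr hTne) ?_
  · simpa only [WeakFixedPointProperty, lipschitzOnWith_one_iff_norm_sub_le] using hWFPP
  · simpa only [AsymptoticallyContractiveOn, dist_eq_norm, ← comap_norm_atTop] using hAC
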